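/- Let n ≥ 2, let f : Fin n → ℝ, and suppose a* is an action with f(a*) > f(a) for all a ≠ a*. Let ε ∈ [0,1] and define the ε-greedy distribution q by q(a*) = 1 − ε + ε/n and q(a) = ε/n for a ≠ a*. Let κ > 0 and let p be the Boltzmann policy p(i) = exp(f(i)/κ) / (Σ_j exp(f(j)/κ)). If p(a*) > q(a*), then the expected value under the Boltzmann policy strictly exceeds the expected value under the ε-greedy policy: Σ_i p(i)·f(i) > Σ_i q(i)·f(i). -/

import Mathlib

/-!
Let `d = p - q`, where `q` is `ε`-greedy with greedy action `a` among `n` actions. Both policies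
have total mass one, so `d` sums to zero. Off `a` the policy `q` is constant, so `d` orders the
remaining actions as `p` does, that is, by value, and Chebyshev's sum inequality over them gives
`d a * (n * f a - ∑ i, f i) ≤ (n - 1) * ∑ i, d i * f i`.
The left-hand side is positive as soon as `f a` exceeds the average value.
-/

theorem sum_lt_card_nsmul_of_forall_ne_lt {ι M : Type*} [Fintype ι] [Nontrivial ι]
    [AddCommMonoid M] [PartialOrder M] [IsOrderedCancelAddMonoid M] {f : ι → M} {a : ι}
    (h : ∀ i, i ≠ a → f i < f a) : ∑ i, f i < Fintype.card ι • f a := by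
  obtain ⟨b, hb⟩ := exists_ne a
  have hle (i : ι) : f i ≤ f a := by
    rcases eq_or_ne i a with rfl | hi
    · exact le_rfl
    · exact (h i hi).le
  calc ∑ i, f i < ∑ _i : ι, f a :=
        Finset.sum_lt_sum (fun i _ ↦ hle i) ⟨b, Finset.mem_univ b, h b hb⟩
    _ = Fintype.card ι • f a := by simp

section Chebyshev

variable {ι R : Type*} [Fintype ι] [CommRing R] [LinearOrder R] [IsStrictOrderedRing R]
  {d f : ι → R} {a : ι}

theorem mul_card_mul_sub_sum_le_of_sum_eq_zero (hd : MonovaryOn d f {a}ᶜ)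
    (hsum : ∑ i, d i = 0) :
    d a * (Fintype.card ι * f a - ∑ i, f i) ≤ (Fintype.card ι - 1) * ∑ i, d i * f i := by
  classical
  have hd_split := Fintype.sum_eq_add_sum_compl a d
  have hf_split := Fintype.sum_eq_add_sum_compl a f
  have hdf_split := Fintype.sum_eq_add_sum_compl a fun i ↦ d i * f i
  have hcard : (({a}ᶜ : Finset ι).card : R) = Fintype.card ι - 1 := by
    rw [Finset.card_compl, Finset.card_singleton,
      Nat.cast_pred (Fintype.card_pos_iff.2 ⟨a⟩)]
  have chebyshev : (∑ i ∈ {a}ᶜ, d i) * ∑ i ∈ {a}ᶜ, f i ≤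
      (Fintype.card ι - 1) * ∑ i ∈ {a}ᶜ, d i * f i := by
    rw [← hcard]
    exact MonovaryOn.sum_mul_sum_le_card_mul_sum (by simpa using hd)
  have hd_compl : ∑ i ∈ {a}ᶜ, d i = -d a := by linarith
  rw [hd_compl] at chebyshev
  rw [hf_split, hdf_split]
  linarith

theorem sum_mul_pos_of_sum_eq_zero (hd : MonovaryOn d f {a}ᶜ) (hsum : ∑ i, d i = 0)
    (hda : 0 < d a) (hf : ∑ i, f i < Fintype.card ι * f a) : 0 < ∑ i, d i * f i := by
  have hcard : (0 : R) ≤ Fintype.card ι - 1 :=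
    sub_nonneg.2 (Nat.one_le_cast.2 (Fintype.card_pos_iff.2 ⟨a⟩))
  exact pos_of_mul_pos_right ((mul_pos hda (sub_pos.2 hf)).trans_le
    (mul_card_mul_sub_sum_le_of_sum_eq_zero hd hsum)) hcard

end Chebyshev

section EpsilonGreedy

variable {ι K : Type*} [Fintype ι] [DecidableEq ι] [Field K]

/-- The `ε`-greedy policy with greedy action `a`: it explores uniformly over all actions, `a`
included, with probability `ε`. -/
def epsilonGreedyPolicy (ε : K) (a : ι) : ι → K :=
  fun i ↦ if i = a then 1 - ε + ε / Fintype.card ι else ε / Fintype.card ι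

theorem sum_epsilonGreedyPolicy [CharZero K] (ε : K) (a : ι) :
    ∑ i, epsilonGreedyPolicy ε a i = 1 := by
  have hcard : (Fintype.card ι : K) ≠ 0 := by
    exact_mod_cast (Fintype.card_pos_iff.2 ⟨a⟩).ne'
  have hsplit (i : ι) : epsilonGreedyPolicy ε a i =
      (if i = a then 1 - ε else 0) + ε / Fintype.card ι := by
    unfold epsilonGreedyPolicy
    split_ifs <;> ring
  simp [hsplit, Finset.sum_add_distrib, mul_div_cancel₀ _ hcard]

theorem epsilonGreedyPolicy_of_ne {a i : ι} (ε : K) (hi : i ≠ a) :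
    epsilonGreedyPolicy ε a i = ε / Fintype.card ι :=
  if_neg hi

theorem boltzmann_beats_epsilon_greedy_general [LinearOrder K] [IsStrictOrderedRing K]
    {p f : ι → K} {a : ι} {ε : K} (hp : MonovaryOn p f {a}ᶜ) (hsum : ∑ i, p i = 1)
    (hf : ∑ i, f i < Fintype.card ι * f a) (h : epsilonGreedyPolicy ε a a < p a) :
    ∑ i, epsilonGreedyPolicy ε a i * f i < ∑ i, p i * f i := by
  have hd : MonovaryOn (p - epsilonGreedyPolicy ε a) f {a}ᶜ := fun i hi j hj hij ↦ by
    simpa [epsilonGreedyPolicy_of_ne ε hi, epsilonGreedyPolicy_of_ne ε hj] using hp hi hj hij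
  have hd_sum : ∑ i, (p - epsilonGreedyPolicy ε a) i = 0 := by
    simp [hsum, sum_epsilonGreedyPolicy]
  have hgain := sum_mul_pos_of_sum_eq_zero hd hd_sum (sub_pos.2 h) hf
  simpa [sub_mul] using hgain

end EpsilonGreedy

section Boltzmann

variable {ι : Type*} [Fintype ι] {κ : ℝ} {f : ι → ℝ}

/-- The Boltzmann (softmax) policy at temperature `κ` for the action values `f`. -/
noncomputable def boltzmannPolicy (κ : ℝ) (f : ι → ℝ) : ι → ℝ :=
  fun i ↦ Real.exp (f i / κ) / ∑ j, Real.exp (f j / κ)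

theorem sum_exp_pos [Nonempty ι] (g : ι → ℝ) : 0 < ∑ i, Real.exp (g i) :=
  Finset.sum_pos (fun _ _ ↦ Real.exp_pos _) Finset.univ_nonempty

theorem sum_boltzmannPolicy [Nonempty ι] (κ : ℝ) (f : ι → ℝ) :
    ∑ i, boltzmannPolicy κ f i = 1 := by
  simp only [boltzmannPolicy]
  rw [← Finset.sum_div, div_self (sum_exp_pos _).ne']

theorem boltzmannPolicy_le_boltzmannPolicy_iff (hκ : 0 < κ) {i j : ι} :
    boltzmannPolicy κ f i ≤ boltzmannPolicy κ f j ↔ f i ≤ f j := by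
  have : Nonempty ι := ⟨i⟩
  rw [boltzmannPolicy, boltzmannPolicy, div_le_div_iff_of_pos_right (sum_exp_pos _),
    Real.exp_le_exp, div_le_div_iff_of_pos_right hκ]

theorem monovary_boltzmannPolicy (hκ : 0 < κ) (f : ι → ℝ) :
    Monovary (boltzmannPolicy κ f) f :=
  fun _ _ hij ↦ (boltzmannPolicy_le_boltzmannPolicy_iff hκ).2 hij.le

end Boltzmann

/-- If the Boltzmann policy assigns strictly higher probability to the
(unique) optimal action than the ε-greedy policy does, then the expected value under the
Boltzmann policy strictly exceeds the expected value under the ε-greedy policy. -/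
theorem boltzmann_beats_epsilon_greedy
    (n : ℕ) (hn : 2 ≤ n) (f : Fin n → ℝ) (astar : Fin n)
    (hstar : ∀ a : Fin n, a ≠ astar → f a < f astar)
    (ε : ℝ) (hε0 : 0 ≤ ε) (hε1 : ε ≤ 1)
    (q : Fin n → ℝ)
    (hq : q = fun a : Fin n => if a = astar then 1 - ε + ε / n else ε / n)
    (κ : ℝ) (hκ : 0 < κ)
    (p : Fin n → ℝ)
    (hp : p = fun i : Fin n => Real.exp (f i / κ) / ∑ j, Real.exp (f j / κ))
    (h : q astar < p astar) :
    ∑ i, q i * f i < ∑ i, p i * f i := by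
  have : Nontrivial (Fin n) := Fin.nontrivial_iff_two_le.2 hn
  obtain rfl : q = epsilonGreedyPolicy ε astar := by
    ext i
    simp [hq, epsilonGreedyPolicy]
  obtain rfl : p = boltzmannPolicy κ f := hp
  exact boltzmann_beats_epsilon_greedy_general ((monovary_boltzmannPolicy hκ f).monovaryOn _)
    (sum_boltzmannPolicy κ f) (by simpa using sum_lt_card_nsmul_of_forall_ne_lt hstar) h
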